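/- Let x, y be probability vectors of dimension d, sorted in nonincreasing order, with strictly positive entries. Define P_M(x → y) = sup_{m ≥ 1} [P(x^{⊗m} → y^{⊗m})]^{1/m} and P_C(x → y) = sup_c P(x⊗c → y⊗c), where the supremum in P_C ranges over all probability vectors c (of arbitrary finite dimension) with strictly positive entries, and x^{⊗m} denotes the m-fold tensor power. Then P_M(x → y) = P_C(x → y). -/

import Mathlib

/-- The sum of the `k` largest entries of a vector (equivalently, for vectors with
nonnegative entries, the maximum of `∑ i ∈ s, x i` over subsets `s` of cardinality at
most `k`; this also accounts for padding with zeros). -/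
noncomputable def topSum {ι : Type*} [Fintype ι] [DecidableEq ι] (x : ι → ℝ) (k : ℕ) : ℝ :=
  ((Finset.univ : Finset ι).powerset.filter (fun s => s.card ≤ k)).sup'
    ⟨∅, by simp⟩ (fun s => ∑ i ∈ s, x i)

/-- A probability vector: nonnegative entries summing to 1. -/
def IsProbVec {ι : Type*} [Fintype ι] (x : ι → ℝ) : Prop :=
  (∀ i, 0 ≤ x i) ∧ ∑ i, x i = 1

/-- `x ≺ y` (majorization, after padding with zeros to a common dimension): every partial
sum of the `k` largest entries of `x` is at most that of `y`, with equal total sums. -/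
def PMaj {ι κ : Type*} [Fintype ι] [DecidableEq ι] [Fintype κ] [DecidableEq κ]
    (x : ι → ℝ) (y : κ → ℝ) : Prop :=
  (∀ k : ℕ, topSum x k ≤ topSum y k) ∧ (∑ i, x i = ∑ j, y j)

/-- Tensor product of two vectors: `(x ⊗ y)_{(i,j)} = x_i y_j`. -/
def pvTensor {ι κ : Type*} (x : ι → ℝ) (y : κ → ℝ) : ι × κ → ℝ :=
  fun p => x p.1 * y p.2

/-- The optimal conversion probability
`P(v → w) = min_{0 ≤ n ≤ D-1} (∑_{i=n}^{D-1} v↓_i) / (∑_{i=n}^{D-1} w↓_i)`,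
where the tail sum of the `D - n` smallest entries is the total sum minus the sum of the
`n` largest entries. -/
noncomputable def Pconv {ι : Type*} [Fintype ι] [DecidableEq ι] [Nonempty ι]
    (v w : ι → ℝ) : ℝ :=
  (Finset.range (Fintype.card ι)).inf' (Finset.nonempty_range_iff.mpr Fintype.card_ne_zero)
    (fun n => (∑ i, v i - topSum v n) / (∑ i, w i - topSum w n))

/-- The `m`-fold tensor power of a vector, indexed by tuples `Fin m → Fin d`. -/
def pvPow {d : ℕ} (x : Fin d → ℝ) (m : ℕ) : (Fin m → Fin d) → ℝ :=
  fun f => ∏ j, x (f j)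

/-!
`P(v → w) ≥ a` holds if and only if every set `s` of entries of `v` is matched by a set `t` of
entries of `w`, at least as large as `s`, with `a * w(t) ≤ v(s)`.

A catalyst is returned intact, so it can be used again for each of `m` copies:
`P(x^{⊗m} ⊗ c → y^{⊗m} ⊗ c) ≥ P(x ⊗ c → y ⊗ c)^m`. By the pigeonhole principle, discarding `c`
costs at most a factor `min c`, and the `m`-th root of this factor tends to `1`.

Conversely let `a` be the `m`-th root of `P(x^{⊗m} → y^{⊗m})` and replace `y` by `a • y`, so that
`x^{⊗m}` converts into `y^{⊗m}` with certainty. Then `c = ⨁_{i < m} y^{⊗i} ⊗ x^{⊗(m-1-i)}` is a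
catalyst: `x ⊗ c` and `y ⊗ c` agree except for one block, which is `x^{⊗m}` in the former and
`y^{⊗m}` in the latter.
-/

open Finset Filter Topology

/-- The sum of the `D - n` smallest entries of a vector of dimension `D`: the numerators and
denominators in the definition of `Pconv`. -/
noncomputable def tailSum {ι : Type*} [Fintype ι] [DecidableEq ι] (v : ι → ℝ) (n : ℕ) : ℝ :=
  ∑ i, v i - topSum v n

section Pconv

variable {ι κ : Type*} [Fintype ι] [DecidableEq ι] [Fintype κ] [DecidableEq κ]

theorem sum_le_topSum (v : ι → ℝ) {n : ℕ} {s : Finset ι} (hs : #s ≤ n) :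
    ∑ i ∈ s, v i ≤ topSum v n :=
  le_sup' (fun s => ∑ i ∈ s, v i) (by simpa using hs)

theorem exists_sum_eq_topSum (v : ι → ℝ) (n : ℕ) :
    ∃ s : Finset ι, #s ≤ n ∧ ∑ i ∈ s, v i = topSum v n := by
  obtain ⟨s, hs, h⟩ := exists_mem_eq_sup' (s := (univ : Finset ι).powerset.filter (#· ≤ n))
    ⟨∅, by simp⟩ (fun s => ∑ i ∈ s, v i)
  exact ⟨s, by simpa using hs, h.symm⟩

theorem topSum_comp_equiv_le (e : κ ≃ ι) (v : ι → ℝ) (n : ℕ) :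
    topSum (v ∘ e) n ≤ topSum v n := by
  obtain ⟨s, hs, h⟩ := exists_sum_eq_topSum (v ∘ e) n
  rw [← h]
  simpa using sum_le_topSum v (s := s.map e.toEmbedding) (by simpa using hs)

theorem topSum_comp_equiv (e : κ ≃ ι) (v : ι → ℝ) (n : ℕ) : topSum (v ∘ e) n = topSum v n := by
  refine (topSum_comp_equiv_le e v n).antisymm ?_
  simpa [Function.comp_assoc] using topSum_comp_equiv_le e.symm (v ∘ e) n

theorem tailSum_le_sum (v : ι → ℝ) {n : ℕ} {s : Finset ι} (hs : Fintype.card ι ≤ #s + n) :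
    tailSum v n ≤ ∑ i ∈ s, v i := by
  have hcompl : ∑ i ∈ sᶜ, v i ≤ topSum v n := sum_le_topSum v (by rw [card_compl]; omega)
  rw [tailSum, ← sum_add_sum_compl s]
  linarith

theorem exists_sum_eq_tailSum (v : ι → ℝ) (n : ℕ) :
    ∃ s : Finset ι, Fintype.card ι ≤ #s + n ∧ ∑ i ∈ s, v i = tailSum v n := by
  obtain ⟨s, hs, h⟩ := exists_sum_eq_topSum v n
  refine ⟨sᶜ, by rw [card_compl]; omega, ?_⟩
  rw [tailSum, ← h, ← sum_add_sum_compl s, add_sub_cancel_left]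

theorem tailSum_pos {v : ι → ℝ} (hv : ∀ i, 0 < v i) {n : ℕ} (hn : n < Fintype.card ι) :
    0 < tailSum v n := by
  obtain ⟨s, hs, h⟩ := exists_sum_eq_tailSum v n
  rw [← h]
  exact sum_pos (fun i _ => hv i) (card_pos.mp (by omega))

variable [Nonempty ι] [Nonempty κ]

theorem Pconv_comp_equiv (e e' : κ ≃ ι) (v w : ι → ℝ) :
    Pconv (v ∘ e) (w ∘ e') = Pconv v w :=
  inf'_congr _ (by rw [Fintype.card_congr e]) fun n _ => by
    simp only [topSum_comp_equiv, Function.comp_apply, Equiv.sum_comp]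

theorem le_Pconv_iff_tailSum {v w : ι → ℝ} (hw : ∀ i, 0 < w i) {a : ℝ} :
    a ≤ Pconv v w ↔ ∀ n < Fintype.card ι, a * tailSum w n ≤ tailSum v n := by
  rw [Pconv, le_inf'_iff]
  simp only [mem_range]
  exact forall₂_congr fun n hn => le_div_iff₀ (tailSum_pos hw hn)

theorem le_Pconv_iff {v w : ι → ℝ} (hw : ∀ i, 0 < w i) {a : ℝ} (ha : 0 ≤ a) :
    a ≤ Pconv v w ↔
      ∀ s : Finset ι, ∃ t : Finset ι, #s ≤ #t ∧ a * ∑ i ∈ t, w i ≤ ∑ i ∈ s, v i := by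
  rw [le_Pconv_iff_tailSum hw]
  constructor
  · intro h s
    rcases s.eq_empty_or_nonempty with rfl | hs
    · exact ⟨∅, by simp⟩
    · have hspos := hs.card_pos
      have hsle := card_le_univ s
      obtain ⟨t, ht, hwt⟩ := exists_sum_eq_tailSum w (Fintype.card ι - #s)
      refine ⟨t, by omega, ?_⟩
      rw [hwt]
      exact (h _ (by omega)).trans (tailSum_le_sum v (by omega))
  · intro h n _
    obtain ⟨s, hs, hvs⟩ := exists_sum_eq_tailSum v n
    obtain ⟨t, hst, hle⟩ := h s
    rw [← hvs]
    exact (mul_le_mul_of_nonneg_left (tailSum_le_sum w (by omega)) ha).trans hle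

theorem le_Pconv_of_mul_le {v w : ι → ℝ} (hw : ∀ i, 0 < w i) {a : ℝ} (ha : 0 ≤ a)
    (h : ∀ i, a * w i ≤ v i) : a ≤ Pconv v w :=
  (le_Pconv_iff hw ha).mpr fun s =>
    ⟨s, le_rfl, by rw [mul_sum]; exact sum_le_sum fun i _ => h i⟩

theorem Pconv_pos {v w : ι → ℝ} (hv : ∀ i, 0 < v i) (hw : ∀ i, 0 < w i) : 0 < Pconv v w := by
  obtain ⟨i₀, hmin⟩ := Finite.exists_min fun i => v i / w i
  have hratio : 0 < v i₀ / w i₀ := div_pos (hv i₀) (hw i₀)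
  exact hratio.trans_le <|
    le_Pconv_of_mul_le hw hratio.le fun i => (le_div_iff₀ (hw i)).mp (hmin i)

theorem Pconv_le_sum_div_sum {v w : ι → ℝ} (hw : ∀ i, 0 < w i) :
    Pconv v w ≤ (∑ i, v i) / ∑ i, w i := by
  have htop : ∀ u : ι → ℝ, topSum u 0 = 0 := fun u => by
    obtain ⟨s, hs, h⟩ := exists_sum_eq_topSum u 0
    rw [← h, card_eq_zero.mp (Nat.le_zero.mp hs), sum_empty]
  rw [le_div_iff₀ (sum_pos (fun i _ => hw i) univ_nonempty)]
  simpa [tailSum, htop] using (le_Pconv_iff_tailSum hw).mp le_rfl 0 Fintype.card_pos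

theorem mul_le_Pconv_trans {u v w : ι → ℝ} (hv : ∀ i, 0 < v i) (hw : ∀ i, 0 < w i) {a b : ℝ}
    (ha : 0 ≤ a) (hb : 0 ≤ b) (huv : a ≤ Pconv u v) (hvw : b ≤ Pconv v w) :
    a * b ≤ Pconv u w := by
  rw [le_Pconv_iff hw (mul_nonneg ha hb)]
  intro r
  obtain ⟨s, hrs, hs⟩ := (le_Pconv_iff hv ha).mp huv r
  obtain ⟨t, hst, ht⟩ := (le_Pconv_iff hw hb).mp hvw s
  refine ⟨t, hrs.trans hst, ?_⟩
  calc a * b * ∑ i ∈ t, w i = a * (b * ∑ i ∈ t, w i) := mul_assoc _ _ _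
    _ ≤ a * ∑ i ∈ s, v i := mul_le_mul_of_nonneg_left ht ha
    _ ≤ ∑ i ∈ r, u i := hs

theorem one_le_Pconv_smul_right_iff {v w : ι → ℝ} (hw : ∀ i, 0 < w i) {a : ℝ} (ha : 0 < a) :
    1 ≤ Pconv v (a • w) ↔ a ≤ Pconv v w := by
  rw [le_Pconv_iff hw ha.le, le_Pconv_iff (w := a • w) (fun i => mul_pos ha (hw i)) zero_le_one]
  simp only [Pi.smul_apply, smul_eq_mul, ← mul_sum, one_mul]

theorem le_Pconv_smul_smul {v w : ι → ℝ} (hw : ∀ i, 0 < w i) {a b : ℝ} (ha : 0 ≤ a)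
    (hb : 0 < b) (h : a ≤ Pconv v w) : a ≤ Pconv (b • v) (b • w) := by
  rw [le_Pconv_iff (w := b • w) (fun i => mul_pos hb (hw i)) ha]
  intro s
  obtain ⟨t, hst, ht⟩ := (le_Pconv_iff hw ha).mp h s
  refine ⟨t, hst, ?_⟩
  simp only [Pi.smul_apply, smul_eq_mul, ← mul_sum]
  rw [mul_left_comm]
  exact mul_le_mul_of_nonneg_left ht hb.le

theorem le_Pconv_of_forall_block {v w : κ × ι → ℝ} (hw : ∀ p, 0 < w p) {a : ℝ} (ha : 0 ≤ a)
    (h : ∀ k, a ≤ Pconv (fun i => v (k, i)) (fun i => w (k, i))) : a ≤ Pconv v w := by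
  rw [le_Pconv_iff hw ha]
  intro s
  let slice (k : κ) : Finset ι := {i | (k, i) ∈ s}
  choose t hst ht using fun k => (le_Pconv_iff (fun i => hw (k, i)) ha).mp (h k) (slice k)
  have hs : ∀ p, p ∈ s ↔ p.1 ∈ univ ∧ p.2 ∈ slice p.1 := by simp [slice]
  let u : Finset (κ × ι) := {p | p.2 ∈ t p.1}
  have hu : ∀ p, p ∈ u ↔ p.1 ∈ univ ∧ p.2 ∈ t p.1 := by simp [u]
  refine ⟨u, ?_, ?_⟩
  · rw [card_eq_sum_ones, card_eq_sum_ones, sum_finset_product s univ slice hs,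
      sum_finset_product u univ t hu]
    exact sum_le_sum fun k _ => by simpa only [← card_eq_sum_ones] using hst k
  · rw [sum_finset_product s univ slice hs, sum_finset_product u univ t hu, mul_sum]
    exact sum_le_sum fun k _ => ht k

end Pconv

section pvTensor

theorem pvTensor_pos {ι κ : Type*} {x : ι → ℝ} {y : κ → ℝ} (hx : ∀ i, 0 < x i)
    (hy : ∀ j, 0 < y j) (p : ι × κ) : 0 < pvTensor x y p :=
  mul_pos (hx _) (hy _)

theorem sum_pvTensor {ι κ : Type*} [Fintype ι] [Fintype κ] (x : ι → ℝ) (y : κ → ℝ) :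
    ∑ p, pvTensor x y p = (∑ i, x i) * ∑ j, y j := by
  rw [Fintype.sum_mul_sum, Fintype.sum_prod_type]
  rfl

variable {ι κ μ : Type*} [Fintype ι] [DecidableEq ι] [Nonempty ι] [Fintype κ] [DecidableEq κ]
  [Nonempty κ] [Fintype μ] [DecidableEq μ] [Nonempty μ]

theorem Pconv_pvTensor_le {v w : ι → ℝ} {c : κ → ℝ} (hw : ∀ i, 0 < w i) (hc : ∀ k, 0 < c k) :
    Pconv (pvTensor v c) (pvTensor w c) ≤ (∑ i, v i) / ∑ i, w i := by
  have hsum : ∑ k, c k ≠ 0 := (sum_pos (fun k _ => hc k) univ_nonempty).ne'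
  simpa only [sum_pvTensor, mul_div_mul_right _ _ hsum] using
    Pconv_le_sum_div_sum (v := pvTensor v c) (pvTensor_pos hw hc)

theorem le_Pconv_pvTensor_left {v w : ι → ℝ} {c : κ → ℝ} (hw : ∀ i, 0 < w i)
    (hc : ∀ k, 0 < c k) {a : ℝ} (ha : 0 ≤ a) (h : a ≤ Pconv v w) :
    a ≤ Pconv (pvTensor c v) (pvTensor c w) :=
  le_Pconv_of_forall_block (v := pvTensor c v) (w := pvTensor c w) (pvTensor_pos hc hw) ha
    fun k => show a ≤ Pconv (c k • v) (c k • w) from le_Pconv_smul_smul hw ha (hc k) h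

theorem mul_le_Pconv_pvTensor_pvTensor {v w : ι → ℝ} {v' w' : κ → ℝ} {c : μ → ℝ}
    (hw : ∀ i, 0 < w i) (hv' : ∀ k, 0 < v' k) (hw' : ∀ k, 0 < w' k) (hc : ∀ k, 0 < c k)
    {a b : ℝ} (ha : 0 ≤ a) (hb : 0 ≤ b)
    (h : a ≤ Pconv (pvTensor v c) (pvTensor w c))
    (h' : b ≤ Pconv (pvTensor v' c) (pvTensor w' c)) :
    a * b ≤ Pconv (pvTensor (pvTensor v v') c) (pvTensor (pvTensor w w') c) := by
  have hfirst : a ≤ Pconv (pvTensor (pvTensor v v') c) (pvTensor (pvTensor w v') c) := by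
    let e : (ι × κ) × μ ≃ κ × (ι × μ) :=
      ((Equiv.prodComm ι κ).prodCongr (Equiv.refl μ)).trans (Equiv.prodAssoc κ ι μ)
    have hcomp : ∀ u : ι → ℝ,
        pvTensor (pvTensor u v') c = pvTensor v' (pvTensor u c) ∘ e := fun u => by
      funext p
      simp only [pvTensor, Function.comp_apply, e, Equiv.trans_apply, Equiv.prodCongr_apply,
        Prod.map, Equiv.prodComm_apply, Equiv.prodAssoc_apply, Prod.swap, Equiv.refl_apply]
      ring
    rw [hcomp, hcomp, Pconv_comp_equiv]
    exact le_Pconv_pvTensor_left (pvTensor_pos hw hc) hv' ha h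
  have hsecond : b ≤ Pconv (pvTensor (pvTensor w v') c) (pvTensor (pvTensor w w') c) := by
    have hcomp : ∀ u : κ → ℝ,
        pvTensor (pvTensor w u) c = pvTensor w (pvTensor u c) ∘ Equiv.prodAssoc ι κ μ :=
      fun u => funext fun p => mul_assoc _ _ _
    rw [hcomp, hcomp, Pconv_comp_equiv]
    exact le_Pconv_pvTensor_left (pvTensor_pos hw' hc) hw hb h'
  exact mul_le_Pconv_trans (pvTensor_pos (pvTensor_pos hw hv') hc)
    (pvTensor_pos (pvTensor_pos hw hw') hc) ha hb hfirst hsecond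

-- Among the slices of a set of entries of `w ⊗ c`, one per entry of `c`, some slice has at least
-- the average size.
theorem mul_le_Pconv_of_le_Pconv_pvTensor {v w : ι → ℝ} {c : κ → ℝ} (hw : ∀ i, 0 < w i)
    (hc : ∀ k, 0 < c k) (hsum : ∑ k, c k = 1) {l : ℝ} (hl : 0 ≤ l) (hlc : ∀ k, l ≤ c k) {a : ℝ}
    (ha : 0 ≤ a) (h : a ≤ Pconv (pvTensor v c) (pvTensor w c)) : l * a ≤ Pconv v w := by
  rw [le_Pconv_iff hw (mul_nonneg hl ha)]
  intro s
  obtain ⟨t, hst, ht⟩ := (le_Pconv_iff (pvTensor_pos hw hc) ha).mp h (s ×ˢ univ)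
  obtain ⟨k, -, hk⟩ := exists_le_card_fiber_of_mul_le_card_of_maps_to (s := t) (n := #s)
    (fun p _ => mem_univ p.2) univ_nonempty (by rwa [mul_comm, ← card_product])
  have hinj : Set.InjOn Prod.fst (({p ∈ t | p.2 = k} : Finset (ι × κ)) : Set (ι × κ)) := by
    intro p hp q hq hpq
    simp only [coe_filter, Set.mem_ofPred_eq] at hp hq
    exact Prod.ext hpq (hp.2.trans hq.2.symm)
  refine ⟨({p ∈ t | p.2 = k} : Finset (ι × κ)).image Prod.fst,
    by rwa [card_image_of_injOn hinj], ?_⟩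
  have hslice : l * ∑ p ∈ t with p.2 = k, w p.1 ≤ ∑ p ∈ t, pvTensor w c p :=
    calc l * ∑ p ∈ t with p.2 = k, w p.1
        ≤ ∑ p ∈ t with p.2 = k, pvTensor w c p := by
          rw [mul_sum]
          exact sum_le_sum fun p _ =>
            (mul_comm _ _).trans_le (mul_le_mul_of_nonneg_left (hlc p.2) (hw p.1).le)
      _ ≤ ∑ p ∈ t, pvTensor w c p :=
          sum_le_sum_of_subset_of_nonneg (filter_subset _ _) fun p _ _ =>
            (pvTensor_pos hw hc p).le
  rw [sum_image hinj]
  calc l * a * ∑ p ∈ t with p.2 = k, w p.1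
      = a * (l * ∑ p ∈ t with p.2 = k, w p.1) := by ring
    _ ≤ a * ∑ p ∈ t, pvTensor w c p := mul_le_mul_of_nonneg_left hslice ha
    _ ≤ ∑ p ∈ s ×ˢ univ, pvTensor v c p := ht
    _ = ∑ i ∈ s, v i := by simp [sum_product, pvTensor, ← mul_sum, hsum]

theorem exists_isProbVec_le_Pconv_pvTensor {v w : ι → ℝ} {c : κ → ℝ} (hw : ∀ i, 0 < w i)
    (hc : ∀ k, 0 < c k) {a : ℝ} (ha : 0 ≤ a) (h : a ≤ Pconv (pvTensor v c) (pvTensor w c)) :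
    ∃ (n : ℕ) (c' : Fin (n + 1) → ℝ), IsProbVec c' ∧ (∀ j, 0 < c' j) ∧
      a ≤ Pconv (pvTensor v c') (pvTensor w c') := by
  obtain ⟨n, hn⟩ := Nat.exists_eq_succ_of_ne_zero (Fintype.card_ne_zero (α := κ))
  let e : Fin (n + 1) ≃ κ := (Fintype.equivFinOfCardEq hn).symm
  have hsum : 0 < ∑ k, c k := sum_pos (fun k _ => hc k) univ_nonempty
  set b : ℝ := (∑ k, c k)⁻¹
  have hb : 0 < b := inv_pos.mpr hsum
  have hpos : ∀ j, 0 < b * c (e j) := fun j => mul_pos hb (hc _)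
  refine ⟨n, fun j => b * c (e j), ⟨fun j => (hpos j).le, ?_⟩, hpos, ?_⟩
  · rw [← mul_sum, e.sum_comp c]
    exact inv_mul_cancel₀ hsum.ne'
  · have hcomp : ∀ u : ι → ℝ, (pvTensor u fun j => b * c (e j)) =
        (b • pvTensor u c) ∘ (Equiv.refl ι).prodCongr e := fun u =>
      funext fun p => mul_left_comm _ _ _
    rw [hcomp, hcomp, Pconv_comp_equiv]
    exact le_Pconv_smul_smul (pvTensor_pos hw hc) ha hb h

end pvTensor

/-- The tensor product of a finite family of vectors. The `m`-fold tensor power of `x` is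
`piTensor fun _ : Fin m => x`, which is `pvPow x m` for `x` indexed by `Fin d`. -/
def piTensor {J ι : Type*} [Fintype J] (z : J → ι → ℝ) : (J → ι) → ℝ :=
  fun f => ∏ j, z j (f j)

/-- The hybrid product `y^{⊗i} ⊗ x^{⊗(m-i)}` for `i ≤ m` (and `y^{⊗m}` for `i ≥ m`), which
interpolates between `x^{⊗m}` and `y^{⊗m}`. -/
def hybridPow {ι : Type*} (x y : ι → ℝ) (m i : ℕ) : (Fin m → ι) → ℝ :=
  piTensor fun j => if (j : ℕ) < i then y else x

section piTensor

variable {ι κ : Type*}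

theorem piTensor_pos {J : Type*} [Fintype J] {z : J → ι → ℝ} (hz : ∀ j i, 0 < z j i)
    (f : J → ι) : 0 < piTensor z f :=
  prod_pos fun j _ => hz j (f j)

theorem piTensor_const_smul (a : ℝ) (x : ι → ℝ) (m : ℕ) :
    (piTensor fun _ : Fin m => a • x) = a ^ m • piTensor fun _ : Fin m => x := by
  funext f
  simp [piTensor, prod_mul_distrib]

theorem piTensor_cons {m : ℕ} (z : Fin (m + 1) → ι → ℝ) (i : ι) (f : Fin m → ι) :
    piTensor z (Fin.cons i f : Fin (m + 1) → ι) = z 0 i * piTensor (fun j => z j.succ) f := by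
  simp only [piTensor, Fin.prod_univ_succ, Fin.cons_zero, Fin.cons_succ]

theorem piTensor_snoc {m : ℕ} (z : Fin (m + 1) → ι → ℝ) (f : Fin m → ι) (i : ι) :
    piTensor z (Fin.snoc f i : Fin (m + 1) → ι) =
      z (Fin.last m) i * piTensor (fun j => z j.castSucc) f := by
  simp only [piTensor, Fin.prod_univ_castSucc, Fin.snoc_castSucc, Fin.snoc_last]
  exact mul_comm _ _

theorem hybridPow_pos {x y : ι → ℝ} (hx : ∀ i, 0 < x i) (hy : ∀ i, 0 < y i) (m i : ℕ)
    (f : Fin m → ι) : 0 < hybridPow x y m i f :=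
  piTensor_pos (fun j => by split_ifs <;> assumption) f

theorem hybridPow_zero (x y : ι → ℝ) (m : ℕ) : hybridPow x y m 0 = piTensor fun _ => x := by
  simp only [hybridPow, Nat.not_lt_zero, if_false]

theorem hybridPow_self (x y : ι → ℝ) (m : ℕ) : hybridPow x y m m = piTensor fun _ => y := by
  simp only [hybridPow, Fin.is_lt, if_true]

theorem hybridPow_cons (x y : ι → ℝ) (m i : ℕ) (s : ι) (f : Fin m → ι) :
    hybridPow x y (m + 1) (i + 1) (Fin.cons s f) = y s * hybridPow x y m i f := by
  have hfirst : ((0 : Fin (m + 1)) : ℕ) < i + 1 := i.succ_pos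
  simp only [hybridPow, piTensor_cons, if_pos hfirst, Fin.val_succ, Nat.add_lt_add_iff_right]

theorem hybridPow_snoc (x y : ι → ℝ) {m i : ℕ} (hi : i ≤ m) (f : Fin m → ι) (s : ι) :
    hybridPow x y (m + 1) i (Fin.snoc f s) = x s * hybridPow x y m i f := by
  simp only [hybridPow, piTensor_snoc, Fin.val_last, not_lt.mpr hi, if_false, Fin.val_castSucc]

variable [Fintype ι] [DecidableEq ι] [Nonempty ι] [Fintype κ] [DecidableEq κ] [Nonempty κ]

theorem pow_le_Pconv_pvTensor_piTensor {x y : ι → ℝ} {c : κ → ℝ} (hx : ∀ i, 0 < x i)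
    (hy : ∀ i, 0 < y i) (hc : ∀ k, 0 < c k) {a : ℝ} (ha : 0 ≤ a)
    (h : a ≤ Pconv (pvTensor x c) (pvTensor y c)) (m : ℕ) :
    a ^ m ≤ Pconv (pvTensor (piTensor fun _ : Fin m => x) c)
      (pvTensor (piTensor fun _ : Fin m => y) c) := by
  induction m with
  | zero =>
    rw [pow_zero]
    exact le_Pconv_of_mul_le (pvTensor_pos (piTensor_pos fun _ => hy) hc) zero_le_one
      fun p => by simp [pvTensor, piTensor]
  | succ m ih =>
    let e : (ι × (Fin m → ι)) × κ ≃ (Fin (m + 1) → ι) × κ :=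
      (Fin.consEquiv fun _ : Fin (m + 1) => ι).prodCongr (Equiv.refl κ)
    have hcomp : ∀ u : ι → ℝ, pvTensor (piTensor fun _ : Fin (m + 1) => u) c ∘ e =
        pvTensor (pvTensor u (piTensor fun _ : Fin m => u)) c := fun u => by
      funext p
      exact congrArg (· * c p.2) (piTensor_cons (fun _ => u) p.1.1 p.1.2)
    rw [← Pconv_comp_equiv e e, hcomp, hcomp, pow_succ']
    exact mul_le_Pconv_pvTensor_pvTensor hy (piTensor_pos fun _ => hx)
      (piTensor_pos fun _ => hy) hc ha (pow_nonneg ha m) h ih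

/-- The catalyst `⨁_{i ≤ m} y^{⊗i} ⊗ x^{⊗(m-i)}` (unnormalized). -/
def hybridCatalyst (x y : ι → ℝ) (m : ℕ) : Fin (m + 1) × (Fin m → ι) → ℝ :=
  fun q => hybridPow x y m q.1 q.2

/-- Regroups the indices of `u ⊗ ⨁_k v_k`, the blocks `k` ranging over `κ`, as those of
`⨁_k (u ⊗ v_k)`, whose index pairs are encoded by `e`. -/
def distribEquiv {α β : Type*} (e : ι × α ≃ β) : ι × (κ × α) ≃ κ × β :=
  (Equiv.prodAssoc ι κ α).symm.trans <|
    ((Equiv.prodComm ι κ).prodCongr (Equiv.refl α)).trans <|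
    (Equiv.prodAssoc κ ι α).trans <| (Equiv.refl κ).prodCongr e

-- With `z i = y^{⊗i} ⊗ x^{⊗(m+1-i)}`, tensoring the catalyst with `x` gives `⨁_{i ≤ m} z i` and
-- tensoring it with `y` gives `⨁_{i ≤ m} z (i + 1)`. All blocks but `z 0 = x^{⊗(m+1)}` and
-- `z (m + 1) = y^{⊗(m+1)}` occur in both; the cyclic shift of the blocks pairs these two.
theorem one_le_Pconv_pvTensor_hybridCatalyst {x y : ι → ℝ} (hx : ∀ i, 0 < x i)
    (hy : ∀ i, 0 < y i) (m : ℕ)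
    (h : 1 ≤ Pconv (piTensor fun _ : Fin (m + 1) => x) (piTensor fun _ : Fin (m + 1) => y)) :
    1 ≤ Pconv (pvTensor x (hybridCatalyst x y m)) (pvTensor y (hybridCatalyst x y m)) := by
  let z : ℕ → (Fin (m + 1) → ι) → ℝ := hybridPow x y (m + 1)
  let blocks (r : Fin (m + 1) → ℕ) (p : Fin (m + 1) × (Fin (m + 1) → ι)) : ℝ := z (r p.1) p.2
  have hz : ∀ i f, 0 < z i f := hybridPow_pos hx hy (m + 1)
  let σ : Equiv.Perm (Fin (m + 1)) := (finRotate (m + 1)).symm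
  have hx_blocks : pvTensor x (hybridCatalyst x y m) =
      blocks (fun i => i) ∘ distribEquiv (Fin.snocEquiv fun _ => ι) := by
    funext p
    exact (hybridPow_snoc x y (Nat.lt_succ_iff.mp p.2.1.2) p.2.2 p.1).symm
  have hy_blocks : pvTensor y (hybridCatalyst x y m) =
      blocks (fun i => i + 1) ∘ distribEquiv (Fin.consEquiv fun _ => ι) := by
    funext p
    exact (hybridPow_cons x y m p.2.1 p.1 p.2.2).symm
  have hblock : ∀ i : Fin (m + 1), 1 ≤ Pconv (z i) (z (σ i + 1)) := by
    intro i
    rcases eq_or_ne i 0 with rfl | hi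
    · have hσ : σ 0 = Fin.last m := (finRotate _).symm_apply_eq.mpr finRotate_last.symm
      rw [hσ]
      simpa only [z, Fin.val_zero, hybridPow_zero, Fin.val_last, hybridPow_self] using h
    · have hσ : (σ i : ℕ) + 1 = i := by
        rw [coe_finRotate_symm_of_ne_zero hi]
        exact Nat.succ_pred (Fin.val_ne_zero_iff.mpr hi)
      rw [hσ]
      exact le_Pconv_of_mul_le (hz i) zero_le_one fun f => (one_mul _).le
  rw [hx_blocks, hy_blocks, Pconv_comp_equiv,
    ← Pconv_comp_equiv (Equiv.refl _) (σ.prodCongr (Equiv.refl _))]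
  exact le_Pconv_of_forall_block (v := blocks fun i => i) (w := blocks fun i => σ i + 1)
    (fun p => hz _ _) zero_le_one hblock

theorem exists_root_le_Pconv_pvTensor {x y : ι → ℝ} (hx : ∀ i, 0 < x i) (hy : ∀ i, 0 < y i)
    (m : ℕ) : ∃ (n : ℕ) (c : Fin (n + 1) → ℝ), IsProbVec c ∧ (∀ j, 0 < c j) ∧
      Pconv (piTensor fun _ : Fin (m + 1) => x) (piTensor fun _ : Fin (m + 1) => y) ^
        ((1 : ℝ) / (m + 1)) ≤ Pconv (pvTensor x c) (pvTensor y c) := by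
  set P := Pconv (piTensor fun _ : Fin (m + 1) => x) (piTensor fun _ : Fin (m + 1) => y)
  set a := P ^ ((1 : ℝ) / (m + 1)) with ha_def
  have hypow := piTensor_pos fun _ : Fin (m + 1) => hy
  have hP : 0 < P := Pconv_pos (piTensor_pos fun _ => hx) hypow
  have ha : 0 < a := Real.rpow_pos_of_pos hP _
  have hay : ∀ i, 0 < (a • y) i := fun i => mul_pos ha (hy i)
  have hroot : a ^ (m + 1) = P := by
    rw [ha_def, one_div, ← Nat.cast_succ, Real.rpow_inv_natCast_pow hP.le m.succ_ne_zero]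
  have hcopies : 1 ≤ Pconv (piTensor fun _ : Fin (m + 1) => x)
      (piTensor fun _ : Fin (m + 1) => a • y) := by
    rw [piTensor_const_smul, hroot, one_le_Pconv_smul_right_iff hypow hP]
  have hcat_pos : ∀ q, 0 < hybridCatalyst x (a • y) m q := fun q => hybridPow_pos hx hay m q.1 q.2
  have hcat := one_le_Pconv_pvTensor_hybridCatalyst hx hay m hcopies
  have hsmul : ∀ c : Fin (m + 1) × (Fin m → ι) → ℝ, pvTensor (a • y) c = a • pvTensor y c :=
    fun c => funext fun p => mul_assoc _ _ _
  rw [hsmul, one_le_Pconv_smul_right_iff (pvTensor_pos hy hcat_pos) ha] at hcat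
  exact exists_isProbVec_le_Pconv_pvTensor hy hcat_pos ha.le hcat

theorem rpow_mul_Pconv_pvTensor_le_root {x y : ι → ℝ} {c : κ → ℝ} (hx : ∀ i, 0 < x i)
    (hy : ∀ i, 0 < y i) (hc : ∀ k, 0 < c k) (hsum : ∑ k, c k = 1) {l : ℝ} (hl : 0 ≤ l)
    (hlc : ∀ k, l ≤ c k) (m : ℕ) :
    l ^ ((1 : ℝ) / (m + 1)) * Pconv (pvTensor x c) (pvTensor y c) ≤
      Pconv (piTensor fun _ : Fin (m + 1) => x) (piTensor fun _ : Fin (m + 1) => y) ^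
        ((1 : ℝ) / (m + 1)) := by
  set a := Pconv (pvTensor x c) (pvTensor y c) with ha_def
  have ha : 0 ≤ a := (Pconv_pos (pvTensor_pos hx hc) (pvTensor_pos hy hc)).le
  have hreuse := pow_le_Pconv_pvTensor_piTensor hx hy hc ha ha_def.le (m + 1)
  have hdiscard := mul_le_Pconv_of_le_Pconv_pvTensor (piTensor_pos fun _ => hy) hc hsum hl hlc
    (pow_nonneg ha (m + 1)) hreuse
  calc l ^ ((1 : ℝ) / (m + 1)) * a
      = l ^ ((1 : ℝ) / (m + 1)) * (a ^ (m + 1)) ^ ((1 : ℝ) / (m + 1)) := by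
        rw [one_div, ← Nat.cast_succ, Real.pow_rpow_inv_natCast ha m.succ_ne_zero]
    _ = (l * a ^ (m + 1)) ^ ((1 : ℝ) / (m + 1)) :=
        (Real.mul_rpow hl (pow_nonneg ha _)).symm
    _ ≤ _ := Real.rpow_le_rpow (by positivity) hdiscard (by positivity)

theorem tendsto_rpow_one_div_mul {l : ℝ} (hl : l ≠ 0) (a : ℝ) :
    Tendsto (fun m : ℕ => l ^ ((1 : ℝ) / (m + 1)) * a) atTop (𝓝 a) := by
  have hroot := (Real.continuous_const_rpow hl).continuousAt.tendsto.comp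
    (tendsto_one_div_add_atTop_nhds_zero_nat (𝕜 := ℝ))
  simpa [Function.comp_def] using hroot.mul_const a

end piTensor

theorem multicopy_eq_catalytic_probability_general {ι : Type*} [Fintype ι] [DecidableEq ι]
    [Nonempty ι] {x y : ι → ℝ} (hx : ∀ i, 0 < x i) (hy : ∀ i, 0 < y i) :
    (⨆ m : ℕ, (Pconv (piTensor fun _ : Fin (m + 1) => x)
        (piTensor fun _ : Fin (m + 1) => y)) ^ ((1 : ℝ) / (m + 1))) =
      sSup {r : ℝ | ∃ (k : ℕ) (c : Fin (k + 1) → ℝ), IsProbVec c ∧ (∀ j, 0 < c j) ∧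
        r = Pconv (pvTensor x c) (pvTensor y c)} := by
  set C := {r : ℝ | ∃ (k : ℕ) (c : Fin (k + 1) → ℝ), IsProbVec c ∧ (∀ j, 0 < c j) ∧
    r = Pconv (pvTensor x c) (pvTensor y c)}
  have hC_bdd : BddAbove C := by
    refine ⟨(∑ i, x i) / ∑ i, y i, ?_⟩
    rintro _ ⟨k, c, -, hc, rfl⟩
    exact Pconv_pvTensor_le hy hc
  have hroot_le (m : ℕ) : Pconv (piTensor fun _ : Fin (m + 1) => x)
      (piTensor fun _ : Fin (m + 1) => y) ^ ((1 : ℝ) / (m + 1)) ≤ sSup C := by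
    obtain ⟨k, c, hprob, hc, hle⟩ := exists_root_le_Pconv_pvTensor hx hy m
    exact hle.trans (le_csSup hC_bdd ⟨k, c, hprob, hc, rfl⟩)
  refine le_antisymm (ciSup_le hroot_le) (csSup_le ?_ ?_)
  · exact ⟨_, 0, fun _ => 1, ⟨by simp, by simp⟩, by simp, rfl⟩
  · rintro _ ⟨k, c, hprob, hc, rfl⟩
    obtain ⟨j, hmin⟩ := Finite.exists_min c
    refine le_of_tendsto' (tendsto_rpow_one_div_mul (hc j).ne' _) fun m => ?_
    exact (rpow_mul_Pconv_pvTensor_le_root hx hy hc hprob.2 (hc j).le hmin m).trans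
      (le_ciSup ⟨_, Set.forall_mem_range.mpr hroot_le⟩ m)


/-- Asymptotic equivalence of multiple-copy and catalyst-assisted probabilistic
transformations: `P_M(x → y) = sup_m P(x^{⊗m} → y^{⊗m})^{1/m}` equals
`P_C(x → y) = sup_c P(x ⊗ c → y ⊗ c)`. -/
theorem multicopy_eq_catalytic_probability {d : ℕ} (x y : Fin (d + 1) → ℝ)
    (hx : IsProbVec x) (hy : IsProbVec y) (hxa : Antitone x) (hya : Antitone y)
    (hxp : ∀ i, 0 < x i) (hyp : ∀ i, 0 < y i) :
    (⨆ m : ℕ, (Pconv (pvPow x (m + 1)) (pvPow y (m + 1))) ^ ((1 : ℝ) / (m + 1))) =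
      sSup {r : ℝ | ∃ (k : ℕ) (c : Fin (k + 1) → ℝ), IsProbVec c ∧ (∀ j, 0 < c j) ∧
        r = Pconv (pvTensor x c) (pvTensor y c)} :=
  multicopy_eq_catalytic_probability_general hxp hyp
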